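/- Let V be an n-dimensional complex vector space and k ≤ n/2. The fibre product T*Gr(k,V) ×_{X₀} T*Gr(V,k) over the common affine contraction X₀ (the variety of square-zero endomorphisms of V of rank ≤ k) has k+1 irreducible components Z₀, ..., Z_k, where Z_i = {(x₁, y₂, a) : rank(a) ≤ k-i, nullity(y₂ x₁) ≥ k-i} inside the correspondence variety of triples (x₁: S₁ ↪ V, y₂: V ↠ S₂, a: S₂ → S₁). -/

import Mathlib

noncomputable section

variable (n k : ℕ)

/-- Triples `(x₁ : S₁ → V, y₂ : V → S₂, a : S₂ → S₁)` with `dim Sᵢ = k`, `dim V = n`. -/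
abbrev Pt15 := Matrix (Fin n) (Fin k) ℂ × Matrix (Fin k) (Fin n) ℂ ×
  Matrix (Fin k) (Fin k) ℂ

abbrev Idx15 := (Fin n × Fin k) ⊕ (Fin k × Fin n) ⊕ (Fin k × Fin k)

def coords15 (t : Pt15 n k) : Idx15 n k → ℂ :=
  Sum.elim (fun ij => t.1 ij.1 ij.2)
    (Sum.elim (fun ij => t.2.1 ij.1 ij.2) (fun ij => t.2.2 ij.1 ij.2))

def VanishOn15 (f : MvPolynomial (Idx15 n k) ℂ) (S : Set (Pt15 n k)) : Prop :=
  ∀ t ∈ S, MvPolynomial.eval (coords15 n k t) f = 0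

/-- The fibre product `T*Gr(k,V) ×_{X₀} T*Gr(V,k)`, realized inside the
correspondence of triples `(x₁ injective, y₂ surjective, a)` by the equations
`a y₂ x₁ = 0 = y₂ x₁ a`. -/
def FibProd : Set (Pt15 n k) :=
  {t | Function.Injective t.1.mulVecLin ∧ Function.Surjective t.2.1.mulVecLin ∧
    t.2.2 * (t.2.1 * t.1) = 0 ∧ (t.2.1 * t.1) * t.2.2 = 0}

/-- The component `Z_i = {rank a ≤ k - i, nullity (y₂x₁) ≥ k - i}`; by rank–nullity
the latter is `rank (y₂x₁) ≤ i`. -/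
def Z15 (i : ℕ) : Set (Pt15 n k) :=
  {t ∈ FibProd n k | t.2.2.rank ≤ k - i ∧ (t.2.1 * t.1).rank ≤ i}

/-!
`Z_i` is irreducible because any two of its points lie on a curve with polynomial coordinates which
stays in `Z_i` outside finitely many parameters: two polynomials not vanishing on `Z_i` restrict to
nonzero polynomials on such a curve, and so does their product.

The curves come from a normal form. As `a (y₂ x₁) = 0 = (y₂ x₁) a`, changes of basis in `S₁`, `S₂`
and `V` bring `(x₁, y₂, a)` into an affine space of triples, where `x₁` is a fixed matrix, `y₂ x₁`
lives on the image of a fixed projection `P` of rank `i` and `a` on its kernel. Replacing inverses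
by adjugates turns the changes of basis into polynomial maps defined for all matrices, so one may
move along a straight line both in the affine space and in the changes of basis. The equations and
the rank bounds survive, while injectivity and surjectivity fail only at zeros of a determinant.
-/

section PolynomialCurves

open Polynomial Filter

variable {K σ : Type*} [Field K]

lemma eventually_cofinite_eval_ne_zero {p : K[X]} (hp : p ≠ 0) :
    ∀ᶠ t in cofinite, p.eval t ≠ 0 :=
  (finite_setOfPred_isRoot hp).eventually_cofinite_notMem

lemma eval_aeval_curve (γ : σ → K[X]) (f : MvPolynomial σ K) (t : K) :
    (MvPolynomial.aeval γ f).eval t = MvPolynomial.eval (fun s => (γ s).eval t) f := by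
  rw [MvPolynomial.aeval_def, MvPolynomial.polynomial_eval_eval₂, MvPolynomial.eval,
    MvPolynomial.coe_eval₂Hom]
  congr 1
  ext c
  simp

/-- Any two points of `S` lie on a polynomially parametrized curve which stays in `S` up to finitely
many parameters: an elementary criterion for irreducibility in the Zariski topology. -/
def PolynomiallyConnected (S : Set (σ → K)) : Prop :=
  ∀ x ∈ S, ∀ y ∈ S, ∃ γ : σ → K[X], (fun s => (γ s).eval 0) = x ∧ (fun s => (γ s).eval 1) = y ∧
    ∀ᶠ t in cofinite, (fun s => (γ s).eval t) ∈ S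

theorem PolynomiallyConnected.vanishes_or_vanishes [Infinite K] {S : Set (σ → K)}
    (hS : PolynomiallyConnected S) {f g : MvPolynomial σ K}
    (hfg : ∀ x ∈ S, MvPolynomial.eval x (f * g) = 0) :
    (∀ x ∈ S, MvPolynomial.eval x f = 0) ∨ (∀ x ∈ S, MvPolynomial.eval x g = 0) := by
  by_contra! ⟨⟨x, hx, hfx⟩, y, hy, hgy⟩
  obtain ⟨γ, rfl, rfl, hγ⟩ := hS x hx y hy
  rw [← eval_aeval_curve] at hfx hgy
  have hf : MvPolynomial.aeval γ f ≠ 0 := fun h => hfx (by rw [h, eval_zero])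
  have hg : MvPolynomial.aeval γ g ≠ 0 := fun h => hgy (by rw [h, eval_zero])
  obtain ⟨t, htS, ht⟩ := (hγ.and (eventually_cofinite_eval_ne_zero (mul_ne_zero hf hg))).exists
  rw [← map_mul, eval_aeval_curve] at ht
  exact ht (hfg _ htS)

variable {m l : Type*}

lemma eventually_exists_left_inverse_map_eval [Fintype m] [Finite l] [DecidableEq l]
    {M : Matrix m l K[X]} {t₀ : K}
    (h : ∃ L : Matrix l m K, L * M.map (evalRingHom t₀) = 1) :
    ∀ᶠ t in cofinite, ∃ L : Matrix l m K, L * M.map (evalRingHom t) = 1 := by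
  cases nonempty_fintype l
  obtain ⟨L, hL⟩ := h
  have eval_det (t : K) : (L.map C * M).det.eval t = (L * M.map (evalRingHom t)).det := by
    rw [← coe_evalRingHom, RingHom.map_det, RingHom.mapMatrix_apply, Matrix.map_mul,
      Matrix.map_map]
    congr 3
    ext
    simp
  have hdet : (L.map C * M).det ≠ 0 := fun h => by
    have := eval_det t₀
    rw [h, hL, eval_zero, Matrix.det_one] at this
    exact zero_ne_one this
  filter_upwards [eventually_cofinite_eval_ne_zero hdet] with t ht
  rw [eval_det] at ht
  exact ⟨(L * M.map (evalRingHom t))⁻¹ * L, by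
    rw [Matrix.mul_assoc, Matrix.nonsing_inv_mul _ ht.isUnit]⟩

lemma eventually_exists_right_inverse_map_eval [Fintype m] [Finite l] [DecidableEq l]
    {M : Matrix l m K[X]} {t₀ : K}
    (h : ∃ R : Matrix m l K, M.map (evalRingHom t₀) * R = 1) :
    ∀ᶠ t in cofinite, ∃ R : Matrix m l K, M.map (evalRingHom t) * R = 1 := by
  have transpose_iff (t : K) : (∃ R : Matrix m l K, M.map (evalRingHom t) * R = 1) ↔
      ∃ L : Matrix l m K, L * M.transpose.map (evalRingHom t) = 1 := by
    refine (Matrix.transposeAddEquiv m l K).toEquiv.exists_congr fun R => ?_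
    rw [← Matrix.transpose_eq_one, Matrix.transpose_mul, Matrix.transpose_map]
    rfl
  simp only [transpose_iff] at h ⊢
  exact eventually_exists_left_inverse_map_eval h

lemma matrix_map_evalRingHom_lineMap (M N : Matrix m l K) (t : K) :
    (AffineMap.lineMap (M.map C) (N.map C) (X : K[X])).map (evalRingHom t) =
      AffineMap.lineMap M N t := by
  ext i j
  simpa [AffineMap.lineMap_apply_module] using mul_comm (N i j) t

end PolynomialCurves

section LinearAlgebra

variable {K : Type*} [Field K]

lemma exists_submodule_between_finrank_eq {V : Type*} [AddCommGroup V] [Module K V]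
    [FiniteDimensional K V] {W U : Submodule K V} (hWU : W ≤ U) {r : ℕ}
    (hWr : Module.finrank K W ≤ r) (hrU : r ≤ Module.finrank K U) :
    ∃ W' : Submodule K V, W ≤ W' ∧ W' ≤ U ∧ Module.finrank K W' = r := by
  induction r, hWr using Nat.le_induction with
  | base => exact ⟨W, le_rfl, hWU, rfl⟩
  | succ r _ ih =>
    obtain ⟨W', hWW', hW'U, rfl⟩ := ih (by omega)
    obtain ⟨v, hvU, hvW'⟩ : ∃ v ∈ U, v ∉ W' :=
      SetLike.not_le_iff_exists.1 fun h => by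
        have := Submodule.finrank_mono h
        omega
    exact ⟨W' ⊔ Submodule.span K {v}, le_sup_of_le_left hWW',
      sup_le hW'U (by simpa using hvU), Submodule.finrank_sup_span_singleton hvW'⟩

variable {m l : Type*} [Fintype m] [Fintype l]

lemma mulVecLin_injective_iff_exists_left_inverse [DecidableEq l] {M : Matrix m l K} :
    Function.Injective M.mulVecLin ↔ ∃ L : Matrix l m K, L * M = 1 := by
  classical
  constructor
  · intro h
    obtain ⟨f, hf⟩ := M.mulVecLin.exists_leftInverse_of_injective (LinearMap.ker_eq_bot.2 h)
    refine ⟨LinearMap.toMatrix' f, ?_⟩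
    rw [← LinearMap.toMatrix'_id, ← hf, LinearMap.toMatrix'_comp, ← Matrix.toLin'_apply',
      LinearMap.toMatrix'_toLin']
  · rintro ⟨L, hL⟩
    refine Function.LeftInverse.injective (g := L.mulVecLin) fun v => ?_
    simp [hL]

lemma exists_isUnit_det_mulVec_eq [DecidableEq m] {U W : Submodule K (m → K)} (e : U ≃ₗ[K] W) :
    ∃ g : Matrix m m K, IsUnit g.det ∧ ∀ u : U, g.mulVec u = e u := by
  obtain ⟨f, hf⟩ := Submodule.exists_linearEquiv_restrict_eq e
  refine ⟨LinearMap.toMatrix' f.toLinearMap, ?_, fun u => ?_⟩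
  · rw [LinearMap.det_toMatrix']
    exact f.isUnit_det'
  · rw [LinearMap.toMatrix'_mulVec, hf]
    rfl

lemma exists_isUnit_det_mul_eq [DecidableEq m] {E x : Matrix m l K}
    (hE : Function.Injective E.mulVecLin) (hx : Function.Injective x.mulVecLin) :
    ∃ g : Matrix m m K, IsUnit g.det ∧ g * E = x := by
  classical
  let eE := LinearEquiv.ofInjective _ hE
  let ex := LinearEquiv.ofInjective _ hx
  obtain ⟨g, hg, hgE⟩ := exists_isUnit_det_mulVec_eq (eE.symm ≪≫ₗ ex)
  refine ⟨g, hg, Matrix.ext_of_mulVec_single fun j => ?_⟩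
  rw [← Matrix.mulVec_mulVec]
  simpa [eE, ex, -Matrix.mulVec_single] using hgE (eE (Pi.single j 1))

lemma rank_add_rank_one_sub_of_isIdempotentElem [DecidableEq l] {P : Matrix l l K}
    (hP : IsIdempotentElem P) : P.rank + (1 - P).rank = Fintype.card l := by
  have hP' : IsIdempotentElem P.mulVecLin := by
    rw [IsIdempotentElem, Module.End.mul_eq_comp, ← Matrix.mulVecLin_mul, hP.eq]
  have one_sub : (1 - P).mulVecLin = 1 - P.mulVecLin := by
    ext
    simp
  rw [Matrix.rank, Matrix.rank, one_sub, ← LinearMap.IsIdempotentElem.ker_eq_range_one_sub hP',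
    LinearMap.finrank_range_add_finrank_ker, Module.finrank_fintype_fun_eq_card]

lemma exists_isIdempotentElem_rank_eq {r : ℕ} (hr : r ≤ Fintype.card l) :
    ∃ P : Matrix l l K, IsIdempotentElem P ∧ P.rank = r := by
  classical
  obtain ⟨s, -, hs⟩ := Finset.exists_subset_card_eq (s := (Finset.univ : Finset l)) hr
  refine ⟨Matrix.diagonal fun j => if j ∈ s then 1 else 0, ?_, ?_⟩
  · simp [IsIdempotentElem, Matrix.diagonal_mul_diagonal]
  · simp [Matrix.rank_diagonal, Fintype.card_subtype, hs]

lemma exists_isUnit_det_mul_eq_zero_and_mul_eq_self [DecidableEq l] {a b P : Matrix l l K}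
    (hab : a * b = 0) (hP : IsIdempotentElem P) (hb : b.rank ≤ P.rank)
    (ha : a.rank + P.rank ≤ Fintype.card l) :
    ∃ q : Matrix l l K, IsUnit q.det ∧ a * q * P = 0 ∧ P * (q⁻¹ * b) = q⁻¹ * b := by
  have range_le_ker : LinearMap.range b.mulVecLin ≤ LinearMap.ker a.mulVecLin := by
    rw [LinearMap.range_le_ker_iff, ← Matrix.mulVecLin_mul, hab, Matrix.mulVecLin_zero]
  have le_finrank_ker : P.rank ≤ Module.finrank K (LinearMap.ker a.mulVecLin) := by
    have := a.mulVecLin.finrank_range_add_finrank_ker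
    rw [Module.finrank_fintype_fun_eq_card] at this
    rw [Matrix.rank] at ha
    omega
  obtain ⟨W, range_le_W, W_le_ker, finrank_W⟩ :=
    exists_submodule_between_finrank_eq range_le_ker hb le_finrank_ker
  let e : LinearMap.range P.mulVecLin ≃ₗ[K] W := LinearEquiv.ofFinrankEq _ _ finrank_W.symm
  obtain ⟨q, hq, hqe⟩ := exists_isUnit_det_mulVec_eq e
  refine ⟨q, hq, Matrix.ext_of_mulVec_single fun j => ?_, Matrix.ext_of_mulVec_single fun j => ?_⟩
  · have mem_ker := LinearMap.mem_ker.1 (W_le_ker (e ⟨P.mulVec (Pi.single j 1), _, rfl⟩).2)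
    rw [← hqe, Matrix.mulVecLin_apply] at mem_ker
    rw [Matrix.zero_mulVec, ← Matrix.mulVec_mulVec, ← Matrix.mulVec_mulVec]
    exact mem_ker
  · obtain ⟨⟨_, v, rfl⟩, hv⟩ :=
      e.surjective ⟨_, range_le_W (LinearMap.mem_range_self b.mulVecLin (Pi.single j 1))⟩
    have b_eq : b.mulVec (Pi.single j 1) = (q * P).mulVec v := by
      rw [← Matrix.mulVec_mulVec, ← Matrix.mulVecLin_apply P, hqe ⟨_, v, rfl⟩, hv]
      rfl
    rw [← Matrix.mulVec_mulVec, ← Matrix.mulVec_mulVec, b_eq, Matrix.mulVec_mulVec _ q⁻¹,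
      Matrix.nonsing_inv_mul_cancel_left _ _ hq, Matrix.mulVec_mulVec, hP.eq]

lemma exists_coordinate_splitting [DecidableEq l] (h : 2 * Fintype.card l ≤ Fintype.card m) :
    ∃ (x z : Matrix m l K) (u v : Matrix l m K), u * x = 1 ∧ u * z = 0 ∧ v * x = 0 ∧ v * z = 1 := by
  classical
  obtain ⟨f⟩ : Nonempty (l ⊕ l ↪ m) :=
    Function.Embedding.nonempty_of_card_le (by rw [Fintype.card_sum]; omega)
  have submatrix_mul (u v : l → m) : (1 : Matrix m m K).submatrix u id *
      (1 : Matrix m m K).submatrix id v = (1 : Matrix m m K).submatrix u v := by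
    rw [← Matrix.submatrix_mul _ _ _ _ _ Function.bijective_id, Matrix.one_mul]
  refine ⟨(1 : Matrix m m K).submatrix id (f ∘ Sum.inl),
    (1 : Matrix m m K).submatrix id (f ∘ Sum.inr), (1 : Matrix m m K).submatrix (f ∘ Sum.inl) id,
    (1 : Matrix m m K).submatrix (f ∘ Sum.inr) id, ?_, ?_, ?_, ?_⟩ <;> rw [submatrix_mul]
  · exact Matrix.submatrix_one _ (f.injective.comp Sum.inl_injective)
  · ext
    simp
  · ext
    simp
  · exact Matrix.submatrix_one _ (f.injective.comp Sum.inr_injective)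

end LinearAlgebra

/-- Triples `(x₁ : S₁ → V, y₂ : V → S₂, a : S₂ → S₁)` in coordinates, over any coefficients: a curve
of triples over `K` is a triple over `K[X]`. -/
abbrev CorrTriple (m l R : Type*) := Matrix m l R × Matrix l m R × Matrix l l R

namespace CorrTriple

variable {m l R S K : Type*}

/-- The coordinates of a triple in affine space. -/
def entries (t : CorrTriple m l R) : (m × l) ⊕ (l × m) ⊕ (l × l) → R :=
  Sum.elim (fun ij => t.1 ij.1 ij.2)
    (Sum.elim (fun ij => t.2.1 ij.1 ij.2) (fun ij => t.2.2 ij.1 ij.2))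

/-- Change of coefficients, used to evaluate curves of triples. -/
def map (f : R → S) (t : CorrTriple m l R) : CorrTriple m l S :=
  (t.1.map f, t.2.1.map f, t.2.2.map f)

lemma entries_map (f : R → S) (t : CorrTriple m l R) :
    (t.map f).entries = fun s => f (t.entries s) := by
  funext s
  rcases s with s | s | s <;> rfl

section CommRing

variable [Fintype m] [Fintype l] [DecidableEq m] [DecidableEq l] [CommRing R] [CommRing S]

/-- The change of basis `(g x p, q y g⁻¹, p⁻¹ a q⁻¹)`, with adjugates in place of inverses so that
it is polynomial in all entries; for invertible `g`, `p`, `q` this only rescales `y` and `a`. -/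
def twist (g : Matrix m m R) (p q : Matrix l l R) (t : CorrTriple m l R) : CorrTriple m l R :=
  (g * t.1 * p, q * t.2.1 * g.adjugate, p.adjugate * t.2.2 * q.adjugate)

lemma map_twist (f : R →+* S) (g : Matrix m m R) (p q : Matrix l l R) (t : CorrTriple m l R) :
    (t.twist g p q).map f = (t.map f).twist (g.map f) (p.map f) (q.map f) := by
  have map_adjugate_m : g.adjugate.map f = (g.map f).adjugate := f.map_adjugate g
  have map_adjugate_l (M : Matrix l l R) : M.adjugate.map f = (M.map f).adjugate :=
    f.map_adjugate M
  simp only [twist, map, Matrix.map_mul, map_adjugate_m, map_adjugate_l]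

lemma twist_snd_mul_fst (g : Matrix m m R) (p q : Matrix l l R) (t : CorrTriple m l R) :
    (t.twist g p q).2.1 * (t.twist g p q).1 = g.det • (q * (t.2.1 * t.1) * p) := by
  calc (t.twist g p q).2.1 * (t.twist g p q).1
      = q * t.2.1 * (g.adjugate * g) * t.1 * p := by simp only [twist, Matrix.mul_assoc]
    _ = g.det • (q * (t.2.1 * t.1) * p) := by
      simp only [Matrix.adjugate_mul, Matrix.mul_smul, Matrix.smul_mul, Matrix.mul_one,
        Matrix.mul_assoc]

end CommRing

section Field

variable [Field K]

open Polynomial in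
lemma map_evalRingHom_lineMap (s t : CorrTriple m l K) (c : K) :
    (AffineMap.lineMap (s.map C) (t.map C) (X : K[X]) : CorrTriple m l K[X]).map (evalRingHom c) =
      AffineMap.lineMap s t c := by
  simp only [map, AffineMap.fst_lineMap, AffineMap.snd_lineMap, Prod.ext_iff,
    matrix_map_evalRingHom_lineMap, and_self]

variable [Fintype m] [Fintype l]

variable (m l K) in
/-- The fibre product `T*Gr(k,V) ×_{X₀} T*Gr(V,k)` over an arbitrary field. -/
def fibreProduct : Set (CorrTriple m l K) :=
  {t | Function.Injective t.1.mulVecLin ∧ Function.Surjective t.2.1.mulVecLin ∧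
    t.2.2 * (t.2.1 * t.1) = 0 ∧ (t.2.1 * t.1) * t.2.2 = 0}

variable (m l K) in
/-- The locus `rank a ≤ r`, `rank (y₂ x₁) ≤ s` in the fibre product; `Z_i` is the case
`(r, s) = (k - i, i)`. -/
def component (r s : ℕ) : Set (CorrTriple m l K) :=
  {t ∈ fibreProduct m l K | t.2.2.rank ≤ r ∧ (t.2.1 * t.1).rank ≤ s}

variable (m l K) in
/-- The closed conditions defining `component m l K r s`, without injectivity of `x₁` and
surjectivity of `y₂`. -/
def degeneracyLocus (r s : ℕ) : Set (CorrTriple m l K) :=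
  {t | t.2.2 * (t.2.1 * t.1) = 0 ∧ (t.2.1 * t.1) * t.2.2 = 0 ∧
    t.2.2.rank ≤ r ∧ (t.2.1 * t.1).rank ≤ s}

lemma mem_component_iff [DecidableEq l] {r s : ℕ} {t : CorrTriple m l K} :
    t ∈ component m l K r s ↔ (∃ L : Matrix l m K, L * t.1 = 1) ∧
      (∃ R : Matrix m l K, t.2.1 * R = 1) ∧ t ∈ degeneracyLocus m l K r s := by
  rw [← mulVecLin_injective_iff_exists_left_inverse,
    ← Matrix.mulVec_surjective_iff_exists_right_inverse, ← Matrix.coe_mulVecLin]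
  simp only [component, fibreProduct, degeneracyLocus, Set.mem_ofPred_eq, and_assoc]

lemma fibreProduct_eq_iUnion_component :
    fibreProduct m l K =
      ⋃ i ∈ Finset.range (Fintype.card l + 1), component m l K (Fintype.card l - i) i := by
  ext t
  simp only [Set.mem_iUnion, Finset.mem_range, exists_prop]
  refine ⟨fun ht => ?_, fun ⟨i, _, ht⟩ => ht.1⟩
  have := Matrix.rank_add_rank_le_card_of_mul_eq_zero ht.2.2.1
  exact ⟨(t.2.1 * t.1).rank, by omega, ht, by omega, le_rfl⟩

lemma twist_mem_degeneracyLocus [DecidableEq m] [DecidableEq l] {r s : ℕ} {t : CorrTriple m l K}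
    (ht : t ∈ degeneracyLocus m l K r s) (g : Matrix m m K) (p q : Matrix l l K) :
    t.twist g p q ∈ degeneracyLocus m l K r s := by
  obtain ⟨hab, hba, ha, hb⟩ := ht
  refine ⟨?_, ?_, ?_, ?_⟩
  · calc (t.twist g p q).2.2 * ((t.twist g p q).2.1 * (t.twist g p q).1)
        = g.det • (p.adjugate * (t.2.2 * (q.adjugate * q) * (t.2.1 * t.1)) * p) := by
          rw [twist_snd_mul_fst]
          simp only [twist, Matrix.mul_smul, Matrix.mul_assoc]
      _ = 0 := by simp [Matrix.adjugate_mul, hab]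
  · calc (t.twist g p q).2.1 * (t.twist g p q).1 * (t.twist g p q).2.2
        = g.det • (q * (t.2.1 * t.1 * (p * p.adjugate) * t.2.2) * q.adjugate) := by
          rw [twist_snd_mul_fst]
          simp only [twist, Matrix.smul_mul, Matrix.mul_assoc]
      _ = 0 := by simp [Matrix.mul_adjugate, hba]
  · exact (Matrix.rank_mul_le_left _ _).trans ((Matrix.rank_mul_le_right _ _).trans ha)
  · rw [twist_snd_mul_fst, ← Matrix.mul_smul]
    exact (Matrix.rank_mul_le_left _ _).trans ((Matrix.rank_mul_le_right _ _).trans hb)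

/-- The affine space of triples in normal form: `x₁ = E`, the map `y₂ x₁` lives on the image of the
projection `P`, and `a` on its kernel. -/
def slice (E : Matrix m l K) (P : Matrix l l K) : Set (CorrTriple m l K) :=
  {t | t.1 = E ∧ P * (t.2.1 * E) = t.2.1 * E ∧ t.2.1 * E * P = t.2.1 * E ∧
    P * t.2.2 = 0 ∧ t.2.2 * P = 0}

variable {E : Matrix m l K} {P : Matrix l l K}

lemma lineMap_mem_slice {s t : CorrTriple m l K} (hs : s ∈ slice E P) (ht : t ∈ slice E P)
    (c : K) : AffineMap.lineMap s t c ∈ slice E P := by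
  obtain ⟨hs₁, hs₂, hs₃, hs₄, hs₅⟩ := hs
  obtain ⟨ht₁, ht₂, ht₃, ht₄, ht₅⟩ := ht
  refine ⟨?_, ?_, ?_, ?_, ?_⟩ <;>
    simp only [AffineMap.fst_lineMap, AffineMap.snd_lineMap]
  · rw [hs₁, ht₁, AffineMap.lineMap_same_apply]
  all_goals
    simp only [AffineMap.lineMap_apply_module, Matrix.add_mul, Matrix.mul_add, Matrix.smul_mul,
      Matrix.mul_smul, hs₂, hs₃, hs₄, hs₅, ht₂, ht₃, ht₄, ht₅, smul_zero, add_zero]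

lemma slice_subset_degeneracyLocus :
    slice E P ⊆ degeneracyLocus m l K (Fintype.card l - P.rank) P.rank := by
  rintro ⟨x, y, a⟩ ⟨rfl, hPb, hbP, hPa, haP⟩
  refine ⟨?_, ?_, ?_, ?_⟩
  · rw [← hPb, ← Matrix.mul_assoc, haP, Matrix.zero_mul]
  · rw [← hbP, Matrix.mul_assoc, hPa, Matrix.mul_zero]
  · exact Nat.le_sub_of_add_le (Matrix.rank_add_rank_le_card_of_mul_eq_zero haP)
  · rw [← hPb]
    exact Matrix.rank_mul_le_left _ _

section DecidableEq

variable [DecidableEq m] [DecidableEq l]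

/-- The right inverse of `twist g p q` for invertible `g`, `p`, `q`, compensating for the rescalings
in `twist`. -/
def untwist (g : Matrix m m K) (p q : Matrix l l K) (t : CorrTriple m l K) : CorrTriple m l K :=
  (g⁻¹ * t.1 * p⁻¹, g.det⁻¹ • (q⁻¹ * t.2.1 * g), (p.det * q.det)⁻¹ • (p * t.2.2 * q))

lemma twist_untwist {g : Matrix m m K} {p q : Matrix l l K} (hg : IsUnit g.det)
    (hp : IsUnit p.det) (hq : IsUnit q.det) (t : CorrTriple m l K) :
    (t.untwist g p q).twist g p q = t := by
  obtain ⟨x, y, a⟩ := t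
  refine Prod.ext ?_ (Prod.ext ?_ ?_)
  · simp only [twist, untwist, Matrix.mul_assoc, Matrix.nonsing_inv_mul _ hp, Matrix.mul_one,
      Matrix.mul_nonsing_inv_cancel_left _ _ hg]
  · calc q * (g.det⁻¹ • (q⁻¹ * y * g)) * g.adjugate
        = g.det⁻¹ • (q * q⁻¹ * y * (g * g.adjugate)) := by
          simp only [Matrix.mul_smul, Matrix.smul_mul, Matrix.mul_assoc]
      _ = y := by
          rw [Matrix.mul_nonsing_inv _ hq, Matrix.mul_adjugate, Matrix.one_mul, Matrix.mul_smul,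
            Matrix.mul_one, inv_smul_smul₀ hg.ne_zero]
  · calc p.adjugate * ((p.det * q.det)⁻¹ • (p * a * q)) * q.adjugate
        = (p.det * q.det)⁻¹ • (p.adjugate * p * a * (q * q.adjugate)) := by
          simp only [Matrix.mul_smul, Matrix.smul_mul, Matrix.mul_assoc]
      _ = (p.det * q.det)⁻¹ • (p.det * q.det) • a := by
          simp only [Matrix.adjugate_mul, Matrix.mul_adjugate, Matrix.smul_mul, Matrix.mul_smul,
            Matrix.one_mul, Matrix.mul_one, smul_smul, mul_comm]
      _ = a := inv_smul_smul₀ (mul_ne_zero hp.ne_zero hq.ne_zero) a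

lemma exists_mem_slice_twist_eq (hE : Function.Injective E.mulVecLin) (hP : IsIdempotentElem P)
    {t : CorrTriple m l K} (ht : t ∈ component m l K (Fintype.card l - P.rank) P.rank) :
    ∃ w ∈ slice E P, ∃ g p q, w.twist g p q = t := by
  obtain ⟨x, y, a⟩ := t
  obtain ⟨⟨hx, -, hab, hba⟩, ha, hb⟩ := ht
  dsimp only at hx hab hba ha hb
  have rank_add := rank_add_rank_one_sub_of_isIdempotentElem hP
  obtain ⟨q, hq, aqP, Pqb⟩ :=
    exists_isUnit_det_mul_eq_zero_and_mul_eq_self hab hP hb (by omega)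
  obtain ⟨r, hr, brP, Pra⟩ :=
    exists_isUnit_det_mul_eq_zero_and_mul_eq_self hba hP.one_sub (by omega) (by omega)
  have hxr : Function.Injective (x * r).mulVecLin := by
    rw [Matrix.mulVecLin_mul]
    exact hx.comp (Matrix.mulVec_injective_of_isUnit ((Matrix.isUnit_iff_isUnit_det r).2 hr))
  obtain ⟨g, hg, hgE⟩ := exists_isUnit_det_mul_eq hE hxr
  rw [Matrix.mul_sub, Matrix.mul_one, sub_eq_zero] at brP
  rw [Matrix.sub_mul, Matrix.one_mul, sub_eq_self] at Pra
  have yE : (untwist g r⁻¹ q (x, y, a)).2.1 * E = g.det⁻¹ • (q⁻¹ * (y * x) * r) := by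
    simp only [untwist, Matrix.smul_mul, Matrix.mul_assoc, hgE]
  refine ⟨untwist g r⁻¹ q (x, y, a), ⟨?_, ?_, ?_, ?_, ?_⟩, g, r⁻¹, q,
    twist_untwist hg (Matrix.isUnit_nonsing_inv_det r hr) hq _⟩
  · simp only [untwist, Matrix.nonsing_inv_nonsing_inv r hr, Matrix.mul_assoc, ← hgE,
      Matrix.nonsing_inv_mul_cancel_left _ _ hg]
  · rw [yE, Matrix.mul_smul, ← Matrix.mul_assoc, Pqb]
  · rw [yE, Matrix.smul_mul, Matrix.mul_assoc q⁻¹, Matrix.mul_assoc q⁻¹, ← brP]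
  · rw [untwist, Matrix.mul_smul, ← Matrix.mul_assoc, Pra, Matrix.zero_mul, smul_zero]
  · rw [untwist, Matrix.smul_mul, Matrix.mul_assoc r⁻¹, Matrix.mul_assoc r⁻¹, aqP,
      Matrix.mul_zero, smul_zero]

end DecidableEq

open Polynomial Filter in
theorem polynomiallyConnected_entries_image_component (hP : IsIdempotentElem P) :
    PolynomiallyConnected
      (entries '' component m l K (Fintype.card l - P.rank) P.rank) := by
  classical
  rintro _ ⟨t₀, h₀, rfl⟩ _ ⟨t₁, h₁, rfl⟩
  obtain ⟨w₀, hw₀, g₀, p₀, q₀, rfl⟩ := exists_mem_slice_twist_eq h₀.1.1 hP h₀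
  obtain ⟨w₁, hw₁, g₁, p₁, q₁, ht₁⟩ := exists_mem_slice_twist_eq h₀.1.1 hP h₁
  let T : CorrTriple m l K[X] :=
    (AffineMap.lineMap (w₀.map C) (w₁.map C) (X : K[X]) : CorrTriple m l K[X]).twist
      (AffineMap.lineMap (g₀.map C) (g₁.map C) (X : K[X]))
      (AffineMap.lineMap (p₀.map C) (p₁.map C) (X : K[X]))
      (AffineMap.lineMap (q₀.map C) (q₁.map C) (X : K[X]))
  have eval_T (c : K) : T.map (evalRingHom c) = (AffineMap.lineMap w₀ w₁ c : CorrTriple m l K).twist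
      (AffineMap.lineMap g₀ g₁ c) (AffineMap.lineMap p₀ p₁ c) (AffineMap.lineMap q₀ q₁ c) := by
    simp only [T, map_twist, map_evalRingHom_lineMap, matrix_map_evalRingHom_lineMap]
  have eval_entries (c : K) : (fun s => (T.entries s).eval c) = (T.map (evalRingHom c)).entries :=
    (entries_map _ T).symm
  have T_zero : T.map (evalRingHom 0) = w₀.twist g₀ p₀ q₀ := by
    simp only [eval_T, AffineMap.lineMap_apply_zero]
  have T_one : T.map (evalRingHom 1) = t₁ := by
    simp only [eval_T, AffineMap.lineMap_apply_one, ht₁]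
  obtain ⟨left_inverse, right_inverse, -⟩ := mem_component_iff.1 (T_zero ▸ h₀)
  refine ⟨T.entries, by rw [eval_entries, T_zero], by rw [eval_entries, T_one], ?_⟩
  filter_upwards [eventually_exists_left_inverse_map_eval left_inverse,
    eventually_exists_right_inverse_map_eval right_inverse] with c hL hR
  refine eval_entries c ▸ Set.mem_image_of_mem _ (mem_component_iff.2 ⟨hL, hR, ?_⟩)
  rw [eval_T]
  exact twist_mem_degeneracyLocus (slice_subset_degeneracyLocus (lineMap_mem_slice hw₀ hw₁ c)) _ _ _

theorem vanishes_or_vanishes_on_component [Infinite K] {i : ℕ} (hi : i ≤ Fintype.card l)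
    {f g : MvPolynomial ((m × l) ⊕ (l × m) ⊕ (l × l)) K}
    (hfg : ∀ t ∈ component m l K (Fintype.card l - i) i, MvPolynomial.eval t.entries (f * g) = 0) :
    (∀ t ∈ component m l K (Fintype.card l - i) i, MvPolynomial.eval t.entries f = 0) ∨
      (∀ t ∈ component m l K (Fintype.card l - i) i, MvPolynomial.eval t.entries g = 0) := by
  obtain ⟨P, hP, rfl⟩ := exists_isIdempotentElem_rank_eq (K := K) hi
  simpa only [Set.forall_mem_image] using
    (polynomiallyConnected_entries_image_component hP).vanishes_or_vanishes
      (Set.forall_mem_image.2 hfg)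

variable (K) in
lemma exists_mem_component_rank_eq (h : 2 * Fintype.card l ≤ Fintype.card m) {i : ℕ}
    (hi : i ≤ Fintype.card l) :
    ∃ t ∈ component m l K (Fintype.card l - i) i,
      t.2.2.rank = Fintype.card l - i ∧ (t.2.1 * t.1).rank = i := by
  classical
  obtain ⟨P, hP, rfl⟩ := exists_isIdempotentElem_rank_eq (K := K) hi
  obtain ⟨x, z, u, v, ux, uz, vx, vz⟩ := exists_coordinate_splitting (K := K) h
  have yx : (P * u + v) * x = P := by
    rw [Matrix.add_mul, Matrix.mul_assoc, ux, vx, Matrix.mul_one, add_zero]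
  have yz : (P * u + v) * z = 1 := by
    rw [Matrix.add_mul, Matrix.mul_assoc, uz, vz, Matrix.mul_zero, zero_add]
  have rank_one_sub : (1 - P).rank = Fintype.card l - P.rank :=
    Nat.eq_sub_of_add_eq' (rank_add_rank_one_sub_of_isIdempotentElem hP)
  refine ⟨(x, P * u + v, 1 - P), mem_component_iff.2 ⟨⟨u, ux⟩, ⟨z, yz⟩, ?_⟩, rank_one_sub,
    by rw [yx]⟩
  simp only [degeneracyLocus, Set.mem_ofPred_eq, yx]
  exact ⟨hP.one_sub_mul_self, hP.mul_one_sub_self, rank_one_sub.le, le_rfl⟩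

end Field

end CorrTriple

open CorrTriple in
theorem stmt15_general {m l K : Type*} [Fintype m] [Fintype l] [Field K] [Infinite K]
    (h : 2 * Fintype.card l ≤ Fintype.card m) :
    (fibreProduct m l K =
      ⋃ i ∈ Finset.range (Fintype.card l + 1), component m l K (Fintype.card l - i) i) ∧
    (∀ i ≤ Fintype.card l, (component m l K (Fintype.card l - i) i).Nonempty ∧
      ∀ f g : MvPolynomial ((m × l) ⊕ (l × m) ⊕ (l × l)) K,
        (∀ t ∈ component m l K (Fintype.card l - i) i, MvPolynomial.eval t.entries (f * g) = 0) →
          (∀ t ∈ component m l K (Fintype.card l - i) i, MvPolynomial.eval t.entries f = 0) ∨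
            (∀ t ∈ component m l K (Fintype.card l - i) i, MvPolynomial.eval t.entries g = 0)) ∧
    (∀ i ≤ Fintype.card l, ∀ j ≤ Fintype.card l, i ≠ j →
      ¬ component m l K (Fintype.card l - i) i ⊆ component m l K (Fintype.card l - j) j) := by
  refine ⟨fibreProduct_eq_iUnion_component, fun i hi => ⟨?_, fun f g hfg => ?_⟩,
    fun i hi j hj hij hsub => ?_⟩
  · obtain ⟨t, ht, -⟩ := exists_mem_component_rank_eq K h hi
    exact ⟨t, ht⟩
  · exact vanishes_or_vanishes_on_component hi hfg
  · obtain ⟨t, ht, rank_a, rank_b⟩ := exists_mem_component_rank_eq K h hi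
    obtain ⟨-, rank_a_le, rank_b_le⟩ := hsub ht
    omega

/-- for `k ≤ n/2`, the fibre product
`T*Gr(k,V) ×_{X₀} T*Gr(V,k)` has exactly the `k+1` irreducible components
`Z₀, …, Z_k` given by the stated rank conditions: it is their union, each `Z_i` is
nonempty and irreducible, and none is contained in another. -/
theorem stmt15 (hk : 0 < k) (hkn : 2 * k ≤ n) :
    (FibProd n k = ⋃ i ∈ Finset.range (k + 1), Z15 n k i) ∧
    (∀ i ≤ k, (Z15 n k i).Nonempty ∧
      ∀ f g : MvPolynomial (Idx15 n k) ℂ, VanishOn15 n k (f * g) (Z15 n k i) →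
        VanishOn15 n k f (Z15 n k i) ∨ VanishOn15 n k g (Z15 n k i)) ∧
    (∀ i ≤ k, ∀ j ≤ k, i ≠ j → ¬ Z15 n k i ⊆ Z15 n k j) := by
  have h := stmt15_general (K := ℂ) (m := Fin n) (l := Fin k) (by simpa only [Fintype.card_fin])
  simp only [Fintype.card_fin] at h
  exact h

end
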